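/- arXiv:2310.11549 — 2 statements merged into one kernel-verified Lean document; each statement's English description precedes it below -/
import Mathlib

section
/- Let δ ∈ ℝ and let u, g: ℝ² → ℝ (variables x,t) be smooth such that u satisfies the Sawada–Kotera equation u_t = u_{xxxxx} + 5u u_{xxx} + 5u_x u_{xx} + 5u² u_x, and for all (x,t): g_{xx} = −ug + δ and g_t = (2u_{xx} + u²)g_x − (u_{xxx} + u u_x)g − 3δ u_x. Then h := g_x satisfies the linearized Sawada–Kotera equation: h_t = h_{xxxxx} + 5u h_{xxx} + 5u_{xxx} h + 5u_x h_{xx} + 5u_{xx} h_x + 5u² h_x + 10u u_x h. -/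
/-!
By symmetry of second derivatives `(g_x)_t = (g_t)_x`, and differentiating the formula for `g_t` in `x`
and replacing `g_xx` by `δ - u g` gives an expression in `g`, `g_x`, `δ` and the `x`-derivatives of `u`.
Repeatedly differentiating `g_xx = δ - u g` expresses `g_xxx, …, g_xxxxxx` in the same terms, and the
linearized equation becomes a polynomial identity in `g`, `g_x`, `δ`, `u`, `u_x`, …, `u_xxxx`.
-/

noncomputable section

/-- Partial derivative in the first variable (x). -/
def pdx (f : ℝ → ℝ → ℝ) : ℝ → ℝ → ℝ := fun x t => deriv (fun x' => f x' t) x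

/-- Partial derivative in the second variable (t). -/
def pdt (f : ℝ → ℝ → ℝ) : ℝ → ℝ → ℝ := fun x t => deriv (fun t' => f x t') t

/-- The `x`-derivative of a smooth function is its Fréchet derivative in the direction `(1, 0)`. -/
lemma hasDerivAt_fst {f : ℝ → ℝ → ℝ} (hf : ContDiff ℝ (⊤ : ℕ∞) (Function.uncurry f)) (x t : ℝ) :
    HasDerivAt (fun x' => f x' t) (fderiv ℝ (Function.uncurry f) (x, t) (1, 0)) x := by
  have h1 : HasDerivAt (fun x' : ℝ => (x', t)) ((1 : ℝ), (0 : ℝ)) x :=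
    (hasDerivAt_id x).prodMk (hasDerivAt_const x t)
  exact ((hf.differentiable (by simp)) (x, t)).hasFDerivAt.comp_hasDerivAt x h1

/-- The `t`-derivative of a smooth function is its Fréchet derivative in the direction `(0, 1)`. -/
lemma hasDerivAt_snd {f : ℝ → ℝ → ℝ} (hf : ContDiff ℝ (⊤ : ℕ∞) (Function.uncurry f)) (x t : ℝ) :
    HasDerivAt (fun t' => f x t') (fderiv ℝ (Function.uncurry f) (x, t) (0, 1)) t := by
  have h1 : HasDerivAt (fun t' : ℝ => (x, t')) ((0 : ℝ), (1 : ℝ)) t :=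
    (hasDerivAt_const t x).prodMk (hasDerivAt_id t)
  exact ((hf.differentiable (by simp)) (x, t)).hasFDerivAt.comp_hasDerivAt t h1

lemma hasDerivAt_pdx {f : ℝ → ℝ → ℝ} (hf : ContDiff ℝ (⊤ : ℕ∞) (Function.uncurry f)) (x t : ℝ) :
    HasDerivAt (fun x' => f x' t) (pdx f x t) x :=
  (hasDerivAt_fst hf x t).differentiableAt.hasDerivAt

lemma uncurry_pdx {f : ℝ → ℝ → ℝ} (hf : ContDiff ℝ (⊤ : ℕ∞) (Function.uncurry f)) :
    Function.uncurry (pdx f) = fun p => fderiv ℝ (Function.uncurry f) p (1, 0) := by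
  funext ⟨x, t⟩
  exact (hasDerivAt_fst hf x t).deriv

lemma uncurry_pdt {f : ℝ → ℝ → ℝ} (hf : ContDiff ℝ (⊤ : ℕ∞) (Function.uncurry f)) :
    Function.uncurry (pdt f) = fun p => fderiv ℝ (Function.uncurry f) p (0, 1) := by
  funext ⟨x, t⟩
  exact (hasDerivAt_snd hf x t).deriv

lemma contDiff_fderiv_apply {F : ℝ × ℝ → ℝ} (hF : ContDiff ℝ (⊤ : ℕ∞) F) (v : ℝ × ℝ) :
    ContDiff ℝ (⊤ : ℕ∞) (fun p => fderiv ℝ F p v) :=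
  (hF.fderiv_right (m := (⊤ : ℕ∞)) (by simp)).clm_apply contDiff_const

lemma contDiff_pdx {f : ℝ → ℝ → ℝ} (hf : ContDiff ℝ (⊤ : ℕ∞) (Function.uncurry f)) :
    ContDiff ℝ (⊤ : ℕ∞) (Function.uncurry (pdx f)) := by
  rw [uncurry_pdx hf]
  exact contDiff_fderiv_apply hf _

lemma contDiff_pdt {f : ℝ → ℝ → ℝ} (hf : ContDiff ℝ (⊤ : ℕ∞) (Function.uncurry f)) :
    ContDiff ℝ (⊤ : ℕ∞) (Function.uncurry (pdt f)) := by
  rw [uncurry_pdt hf]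
  exact contDiff_fderiv_apply hf _

lemma pdt_pdx_comm {f : ℝ → ℝ → ℝ} (hf : ContDiff ℝ (⊤ : ℕ∞) (Function.uncurry f)) (x t : ℝ) :
    pdt (pdx f) x t = pdx (pdt f) x t := by
  have h1 : pdt (pdx f) x t = _ := (hasDerivAt_snd (contDiff_pdx hf) x t).deriv
  have h2 : pdx (pdt f) x t = _ := (hasDerivAt_fst (contDiff_pdt hf) x t).deriv
  have hd : DifferentiableAt ℝ (fderiv ℝ (Function.uncurry f)) (x, t) :=
    (hf.fderiv_right (m := (⊤ : ℕ∞)) (by simp)).differentiable (by simp) _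
  have hs : IsSymmSndFDerivAt ℝ (Function.uncurry f) (x, t) :=
    hf.contDiffAt.isSymmSndFDerivAt (by
      simpa using WithTop.coe_le_coe.2 (le_top : (2 : ℕ∞) ≤ ⊤))
  rw [h1, h2, uncurry_pdx hf, uncurry_pdt hf,
    fderiv_clm_apply hd (differentiableAt_const _), fderiv_clm_apply hd (differentiableAt_const _)]
  simpa using hs.eq (0, 1) (1, 0)

theorem stmt7 (δ : ℝ) (u g : ℝ → ℝ → ℝ)
    (hu : ContDiff ℝ (⊤ : ℕ∞) (Function.uncurry u))
    (hg : ContDiff ℝ (⊤ : ℕ∞) (Function.uncurry g))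
    (hSK : ∀ x t, pdt u x t = pdx^[5] u x t + 5 * u x t * pdx^[3] u x t
      + 5 * pdx u x t * pdx^[2] u x t + 5 * u x t ^ 2 * pdx u x t)
    (hgxx : ∀ x t, pdx^[2] g x t = -(u x t) * g x t + δ)
    (hgt : ∀ x t, pdt g x t = (2 * pdx^[2] u x t + u x t ^ 2) * pdx g x t
      - (pdx^[3] u x t + u x t * pdx u x t) * g x t - 3 * δ * pdx u x t) :
    ∀ x t, pdt (pdx g) x t =
      pdx^[5] (pdx g) x t + 5 * u x t * pdx^[3] (pdx g) x t
        + 5 * pdx^[3] u x t * pdx g x t + 5 * pdx u x t * pdx^[2] (pdx g) x t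
        + 5 * pdx^[2] u x t * pdx (pdx g) x t + 5 * u x t ^ 2 * pdx (pdx g) x t
        + 10 * u x t * pdx u x t * pdx g x t := by
  intro x t
  have hu1 := contDiff_pdx hu
  have hu2 := contDiff_pdx hu1
  have hu3 := contDiff_pdx hu2
  have hg1 := contDiff_pdx hg
  simp only [Function.iterate_succ, Function.iterate_zero, Function.comp_apply, id_eq] at *
  have du := hasDerivAt_pdx hu
  have du1 := hasDerivAt_pdx hu1
  have du2 := hasDerivAt_pdx hu2
  have du3 := hasDerivAt_pdx hu3
  have dg := hasDerivAt_pdx hg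
  have dg1 := hasDerivAt_pdx hg1
  -- The successive `x`-derivatives of `g_xx = δ - u g`, with `g_xx` eliminated at each step.
  have e2 : pdx (pdx g) = fun x t => -(u x t) * g x t + δ := by
    funext x t
    exact hgxx x t
  have e3 : pdx (pdx (pdx g)) = fun x t => -(pdx u x t * g x t) - u x t * pdx g x t := by
    funext x t
    rw [e2]
    refine ((((du x t).neg.mul (dg x t)).add_const δ).congr_deriv ?_).deriv
    simp only [Pi.neg_apply]
    ring
  have e4 : pdx (pdx (pdx (pdx g))) = fun x t => -(pdx (pdx u) x t * g x t)
      - 2 * (pdx u x t * pdx g x t) + u x t ^ 2 * g x t - u x t * δ := by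
    funext x t
    rw [e3]
    refine ((((du1 x t).mul (dg x t)).neg.sub ((du x t).mul (dg1 x t))).congr_deriv ?_).deriv
    rw [hgxx]
    ring
  have e5 : pdx (pdx (pdx (pdx (pdx g)))) = fun x t => -(pdx (pdx (pdx u)) x t * g x t)
      - 3 * (pdx (pdx u) x t * pdx g x t) + 4 * (u x t * pdx u x t * g x t)
      + u x t ^ 2 * pdx g x t - 3 * (pdx u x t * δ) := by
    funext x t
    rw [e4]
    refine ((((((du2 x t).mul (dg x t)).neg.sub (((du1 x t).mul (dg1 x t)).const_mul 2)).add
      (((du x t).pow 2).mul (dg x t))).sub ((du x t).mul_const δ)).congr_deriv ?_).deriv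
    simp only [Pi.pow_apply]
    rw [hgxx]
    push_cast
    ring
  have e6 : pdx (pdx (pdx (pdx (pdx (pdx g))))) x t = -(pdx (pdx (pdx (pdx u))) x t * g x t)
      - 4 * (pdx (pdx (pdx u)) x t * pdx g x t)
      + (u x t ^ 2 - 3 * pdx (pdx u) x t) * (-(u x t) * g x t + δ)
      + 4 * ((pdx u x t ^ 2 + u x t * pdx (pdx u) x t) * g x t)
      + 6 * (u x t * pdx u x t * pdx g x t) - 3 * (pdx (pdx u) x t * δ) := by
    rw [e5]
    refine (((((((du3 x t).mul (dg x t)).neg.sub (((du2 x t).mul (dg1 x t)).const_mul 3)).add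
      ((((du x t).mul (du1 x t)).mul (dg x t)).const_mul 4)).add
      (((du x t).pow 2).mul (dg1 x t))).sub (((du1 x t).mul_const δ).const_mul 3)).congr_deriv ?_).deriv
    simp only [Pi.pow_apply, Pi.mul_apply]
    rw [hgxx]
    push_cast
    ring
  have egt : pdt g = fun x t => (2 * pdx (pdx u) x t + u x t ^ 2) * pdx g x t
      - (pdx (pdx (pdx u)) x t + u x t * pdx u x t) * g x t - 3 * δ * pdx u x t := by
    funext x t
    exact hgt x t
  have egtx : pdx (pdt g) x t = (pdx (pdx (pdx u)) x t + u x t * pdx u x t) * pdx g x t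
      + (2 * pdx (pdx u) x t + u x t ^ 2) * (-(u x t) * g x t + δ)
      - (pdx (pdx (pdx (pdx u))) x t + pdx u x t ^ 2 + u x t * pdx (pdx u) x t) * g x t
      - 3 * δ * pdx (pdx u) x t := by
    rw [egt]
    refine (((((((du2 x t).const_mul 2).add ((du x t).pow 2)).mul (dg1 x t)).sub
      (((du3 x t).add ((du x t).mul (du1 x t))).mul (dg x t))).sub
      ((du1 x t).const_mul (3 * δ))).congr_deriv ?_).deriv
    simp only [Pi.pow_apply, Pi.mul_apply, Pi.add_apply]
    rw [hgxx]
    push_cast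
    ring
  rw [pdt_pdx_comm hg, egtx, e6, e4, e3, e2]
  ring
end
end

section
/- Let α ∈ ℝ and let u, v, w: ℝ → ℝ be smooth functions such that w satisfies the fifth-order linear equation w''''' − 4u w''' − 6u_x w'' − (2u_{xx} + 4v − 4α)w' − 2v_x w = 0 on ℝ. Then the function 2w w'''' − 2w' w''' + (w'')² − 4u(2w w'' − (w')²) − 4u_x w w' − 4(v − α)w² is constant on ℝ. -/
noncomputable section

/-!
Differentiating the quantity `Q` in the conclusion and cancelling, one finds `Q' = 2 w · E`, where `E`
is the left-hand side of the fifth-order equation; that is, `2 w` is an integrating factor of the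
equation. Hence `Q' = 0` on `ℝ`, and `Q` is constant.
-/

theorem hasDerivAt_iterate_deriv {f : ℝ → ℝ} (hf : ContDiff ℝ (⊤ : ℕ∞) f) (n : ℕ) (x : ℝ) :
    HasDerivAt (deriv^[n] f) (deriv^[n + 1] f x) x := by
  rw [Function.iterate_succ_apply']
  exact ((hf.iterate_deriv n).differentiable (by simp) x).hasDerivAt

theorem stmt16 (α : ℝ) (u v w : ℝ → ℝ)
    (hu : ContDiff ℝ (⊤ : ℕ∞) u) (hv : ContDiff ℝ (⊤ : ℕ∞) v)
    (hw : ContDiff ℝ (⊤ : ℕ∞) w)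
    (heq : ∀ x : ℝ, deriv^[5] w x - 4 * u x * deriv^[3] w x
      - 6 * deriv u x * deriv^[2] w x
      - (2 * deriv^[2] u x + 4 * v x - 4 * α) * deriv w x
      - 2 * deriv v x * w x = 0) :
    ∀ x y : ℝ,
      (2 * w x * deriv^[4] w x - 2 * deriv w x * deriv^[3] w x
          + (deriv^[2] w x) ^ 2
          - 4 * u x * (2 * w x * deriv^[2] w x - (deriv w x) ^ 2)
          - 4 * deriv u x * w x * deriv w x - 4 * (v x - α) * (w x) ^ 2) =
      (2 * w y * deriv^[4] w y - 2 * deriv w y * deriv^[3] w y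
          + (deriv^[2] w y) ^ 2
          - 4 * u y * (2 * w y * deriv^[2] w y - (deriv w y) ^ 2)
          - 4 * deriv u y * w y * deriv w y - 4 * (v y - α) * (w y) ^ 2) := by
  refine is_const_of_deriv_eq_zero (fun x => ?_) fun x => ?_
  all_goals
    have w0 : HasDerivAt w (deriv w x) x := hasDerivAt_iterate_deriv hw 0 x
    have w1 : HasDerivAt (deriv w) (deriv^[2] w x) x := hasDerivAt_iterate_deriv hw 1 x
    have w2 := hasDerivAt_iterate_deriv hw 2 x
    have w3 := hasDerivAt_iterate_deriv hw 3 x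
    have w4 := hasDerivAt_iterate_deriv hw 4 x
    have u0 : HasDerivAt u (deriv u x) x := hasDerivAt_iterate_deriv hu 0 x
    have u1 : HasDerivAt (deriv u) (deriv^[2] u x) x := hasDerivAt_iterate_deriv hu 1 x
    have v0 : HasDerivAt v (deriv v x) x := hasDerivAt_iterate_deriv hv 0 x
    have hQ := (((((((w0.const_mul 2).mul w4).sub ((w1.const_mul 2).mul w3)).add (w2.pow 2)).sub
      ((u0.const_mul 4).mul (((w0.const_mul 2).mul w2).sub (w1.pow 2)))).sub
      (((u1.const_mul 4).mul w0).mul w1)).sub (((v0.sub_const α).const_mul 4).mul (w0.pow 2)))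
  · exact hQ.differentiableAt
  · refine hQ.deriv.trans ?_
    simp only [Pi.mul_apply, Pi.sub_apply, Pi.pow_apply, Nat.reduceAdd]
    linear_combination 2 * w x * heq x
end
end
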